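/- Let m and n be integers with 2 ≤ m ≤ n/2, let B_r ⊂ ℝⁿ be the open ball of radius r > 0 centered at the origin, and let R ≥ r. Then for every radial function u ∈ C₀^∞(B_r) one has the critical Hardy–Rellich inequality I_{n,m}[u,B_r,R] ≥ 0, i.e. ∫_{B_r} |∇^m u|^{n/m} dx ≥ R_{n,m} · ∫_{B_r} |u(x)|^{n/m} / ( |x|ⁿ · E₁(|x|/R)^{n/m} ) dx. -/

import Mathlib

open MeasureTheory Real

/-- `E₁(t) = 1 - ln t`. -/
noncomputable def E1 (t : ℝ) : ℝ := 1 - Real.log t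

/-- `E₂(t) = ln (e E₁(t)) = 1 + ln E₁(t)`. -/
noncomputable def E2 (t : ℝ) : ℝ := 1 + Real.log (E1 t)

/-- The Euclidean Laplacian of a scalar function on `ℝⁿ`. -/
noncomputable def lap {n : ℕ} (f : EuclideanSpace ℝ (Fin n) → ℝ) :
    EuclideanSpace ℝ (Fin n) → ℝ := fun x =>
  ∑ i, fderiv ℝ (fun y => fderiv ℝ f y (EuclideanSpace.single i 1)) x (EuclideanSpace.single i 1)

/-- The constant `R_{n,m,p}`. -/
noncomputable def Rconst (n m : ℕ) (p : ℝ) : ℝ :=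
  if Even m then
    ∏ j ∈ Finset.range (m / 2),
      (((n : ℝ) * (p - 1) + 2 * j * p) / p * (((n : ℝ) - 2 * (j + 1) * p) / p)) ^ p
  else
    (((n : ℝ) - p) / p) ^ p *
      ∏ j ∈ Finset.range (m / 2),
        (((n : ℝ) * (p - 1) + p + 2 * j * p) / p * (((n : ℝ) - p - 2 * (j + 1) * p) / p)) ^ p

/-- The constant `R_{n,m} = ((n-2)(n-m)/n)^{n/m} R_{n,m-2,n/m}`. -/
noncomputable def Rnm (n m : ℕ) : ℝ :=
  (((n : ℝ) - 2) * ((n : ℝ) - m) / n) ^ ((n : ℝ) / m) * Rconst n (m - 2) ((n : ℝ) / m)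

/-- `|∇^m f|`: the norm of `Δ^{m/2} f` for even `m`, of `∇ Δ^{(m-1)/2} f` for odd `m`. -/
noncomputable def nablaPowNorm {n : ℕ} (m : ℕ) (f : EuclideanSpace ℝ (Fin n) → ℝ)
    (x : EuclideanSpace ℝ (Fin n)) : ℝ :=
  if Even m then |lap^[m / 2] f x| else ‖gradient (lap^[m / 2] f) x‖

/-- `I_{n,m}[u, Ω, R]`. -/
noncomputable def Inm (n m : ℕ) (Ω : Set (EuclideanSpace ℝ (Fin n))) (R : ℝ)
    (u : EuclideanSpace ℝ (Fin n) → ℝ) : ℝ :=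
  (∫ x in Ω, (nablaPowNorm m u x) ^ ((n : ℝ) / m)) -
    Rnm n m * ∫ x in Ω, |u x| ^ ((n : ℝ) / m) / (‖x‖ ^ n * (E1 (‖x‖ / R)) ^ ((n : ℝ) / m))

/-!
For a smooth radial `u` supported in `B_r` the inequality reduces, in polar coordinates, to
one-dimensional Hardy inequalities on `(0, r]`. Put `p = n / m`. If `g` is the profile of a radial
function `f`, then `|∇ f| = |g'|` and `Δ f = g'' + (n - 1) g' / t`, so that both the passage from
`g'` to `g` and the passage from `Δ f` to `g'` are governed by the operator `h ↦ h' + κ h / t`, with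
`κ = 0` and `κ = n - 1` respectively. The weighted Hardy inequality `hardy_weight` for this operator
follows from the tangent-line inequality for `|·| ^ p` (`young_tangent`): the difference of the two
integrands dominates the derivative of a constant multiple of `|h| ^ p t ^ s`, which vanishes at
both ends.

Alternating the two cases produces exactly the factors of `R_{n,m-2,p}` and yields
`∫ |∇ ^ m u| ^ p ≥ R_{n,m-2,p} ∫ |Δ u| ^ p |x| ^ (-(m-2) p)` (`IsRad.rellich`, preceded by one
gradient step `IsRad.hardy_grad` when `m` is odd). One further step leads from `Δ u` to `u'` with
constant `(n - 2) ^ p`. The remaining power weight is critical, and the logarithmic inequality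
`hardy_critical`, with constant `((p - 1) / p) ^ p`, passes from `u'` to `u` (`IsRad.critical`);
its boundary term `|h| ^ p E₁ ^ (1 - p)` vanishes at the origin because `E₁ → ∞`.
Since `(p - 1) / p = (n - m) / n`, the product of the constants is `R_{n,m}`.
-/

/-! ### One-dimensional Hardy inequalities -/

/-- Every Hardy inequality below comes from a pointwise bound `Φ' ≤ F - G` with boundary terms
`Φ` vanishing at both ends. Integrability is required of the larger side `F` only: a
non-integrable `G` has Bochner integral `0`, and then the claim is the positivity of `F`. -/
lemma hardy_core {r : ℝ} (hr : 0 < r) {F G Φ Φ' : ℝ → ℝ}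
    (hF : IntegrableOn F (Set.Ioc 0 r)) (hF0 : ∀ t ∈ Set.Ioc 0 r, 0 ≤ F t)
    (hΦ : ∀ t ∈ Set.Ioc 0 r, HasDerivAt Φ (Φ' t) t)
    (hle : ∀ t ∈ Set.Ioc 0 r, Φ' t ≤ F t - G t) (hΦr : Φ r = 0)
    (hΦ0 : Filter.Tendsto Φ (nhdsWithin 0 (Set.Ioi 0)) (nhds 0)) :
    ∫ t in Set.Ioc 0 r, G t ≤ ∫ t in Set.Ioc 0 r, F t := by
  by_cases hG : IntegrableOn G (Set.Ioc 0 r)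
  · have hFG : IntegrableOn (fun t => F t - G t) (Set.Icc 0 r) :=
      (integrableOn_Icc_iff_integrableOn_Ioc).2 (hF.sub hG)
    have key : ∀ ε ∈ Set.Ioo 0 r, -Φ ε ≤ ∫ t in ε..r, (F t - G t) := by
      intro ε hε
      have := intervalIntegral.sub_le_integral_of_hasDeriv_right_of_le (g := Φ) (g' := Φ')
        (φ := fun t => F t - G t) hε.2.le
        (fun t ht => (hΦ t ⟨hε.1.trans_le ht.1, ht.2⟩).continuousAt.continuousWithinAt)
        (fun t ht => (hΦ t ⟨hε.1.trans ht.1, ht.2.le⟩).hasDerivWithinAt)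
        (hFG.mono_set (Set.Icc_subset_Icc_left hε.1.le))
        (fun t ht => hle t ⟨hε.1.trans ht.1, ht.2.le⟩)
      rw [hΦr] at this
      linarith
    have hcont := intervalIntegral.continuousOn_primitive_interval_left (μ := volume)
      (f := fun t => F t - G t) (a := 0) (b := r) (by rwa [Set.uIcc_of_le hr.le])
    rw [Set.uIcc_of_le hr.le] at hcont
    have h0 : Filter.Tendsto (fun ε => ∫ t in ε..r, (F t - G t)) (nhdsWithin 0 (Set.Ioi 0))
        (nhds (∫ t in (0:ℝ)..r, (F t - G t))) := by
      have h1 := (hcont 0 ⟨le_rfl, hr.le⟩).mono Set.Ioo_subset_Icc_self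
      rw [ContinuousWithinAt, nhdsWithin_Ioo_eq_nhdsGT hr] at h1
      exact h1
    have h2 : (0:ℝ) ≤ ∫ t in (0:ℝ)..r, (F t - G t) := by
      have h3 : Filter.Tendsto (fun ε => -Φ ε) (nhdsWithin 0 (Set.Ioi 0)) (nhds 0) := by
        simpa using hΦ0.neg
      refine le_of_tendsto_of_tendsto h3 h0 ?_
      filter_upwards [Ioo_mem_nhdsGT hr] with ε hε using key ε hε
    rw [intervalIntegral.integral_of_le hr.le, integral_sub hF hG] at h2
    linarith
  · -- the Bochner integral of a non-integrable function is `0`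
    rw [integral_undef hG]
    exact setIntegral_nonneg measurableSet_Ioc hF0

/-- Tangent-line inequality for the convex function `|·| ^ p`, in the form given by Young. -/
lemma young_tangent {p : ℝ} (hp : 1 < p) (X Y : ℝ) :
    p * (|Y| ^ (p - 2) * Y * X) - (p - 1) * |Y| ^ p ≤ |X| ^ p := by
  have hp0 : p ≠ 0 := by positivity
  by_cases hY : Y = 0
  · subst hY
    simp only [mul_zero, zero_mul, abs_zero, Real.zero_rpow hp0, sub_zero]
    positivity
  have hYp : 0 < |Y| := abs_pos.2 hY
  have hc := Real.HolderConjugate.conjExponent hp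
  have h1 := Real.young_inequality_of_nonneg (abs_nonneg X)
    (Real.rpow_nonneg hYp.le (p - 1)) hc
  rw [← Real.rpow_mul hYp.le, hc.sub_one_mul_conj] at h1
  have h2 : |Y| ^ (p - 2) * Y * X ≤ |X| * |Y| ^ (p - 1) := by
    have e : |Y| ^ (p - 1) = |Y| ^ (p - 2) * |Y| := by
      rw [show p - 1 = (p - 2) + 1 by ring, Real.rpow_add_one hYp.ne']
    rw [e]
    have := le_abs_self (Y * X)
    rw [abs_mul] at this
    have h3 := mul_le_mul_of_nonneg_left this (Real.rpow_nonneg hYp.le (p - 2))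
    linarith
  have h4 : |Y| ^ p / p.conjExponent = (p - 1) / p * |Y| ^ p := by
    rw [Real.conjExponent]
    have : p - 1 ≠ 0 := by linarith
    field_simp
  rw [h4] at h1
  have h5 := mul_le_mul_of_nonneg_left (h2.trans h1) (show (0:ℝ) ≤ p by linarith)
  have h6 : p * (|X| ^ p / p + (p - 1) / p * |Y| ^ p) = |X| ^ p + (p - 1) * |Y| ^ p := by
    field_simp
  linarith

lemma integrableOn_weight {r a p : ℝ} (hr : 0 < r) (ha : -1 < a) (hp : 0 ≤ p) {L : ℝ → ℝ}
    (hL : Continuous L) : IntegrableOn (fun t => |L t| ^ p * t ^ a) (Set.Ioc 0 r) := by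
  have h := (intervalIntegral.intervalIntegrable_rpow' (a := 0) (b := r) ha)
  rw [intervalIntegrable_iff_integrableOn_Icc_of_le hr.le] at h
  have hc : Continuous fun t => |L t| ^ p := hL.abs.rpow_const fun _ => Or.inr hp
  exact (h.continuousOn_mul hc.continuousOn isCompact_Icc).mono_set Set.Ioc_subset_Icc_self

/-- One-dimensional weighted Hardy inequality for the operator `h ↦ h' + κ h / t`, which is
`t ^ (-κ) (t ^ κ h)'`. The value `κ = 0` gives the inequality for radial gradients and `κ = n - 1`
the one relating the radial Laplacian to the radial gradient. -/
lemma hardy_weight {r p s κ : ℝ} (hr : 0 < r) (hp : 1 < p) (hs : 0 < s) {h h' L : ℝ → ℝ}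
    (hh : ∀ t, HasDerivAt h (h' t) t) (hL : Continuous L)
    (hLe : ∀ t, 0 < t → L t = h' t + κ / t * h t) (h0 : h r = 0) :
    |(p * κ - s) / p| ^ p * ∫ t in Set.Ioc 0 r, |h t| ^ p * t ^ (s - 1) ≤
      ∫ t in Set.Ioc 0 r, |L t| ^ p * t ^ (s - 1 + p) := by
  have hp0 : p ≠ 0 := by positivity
  set d := (p * κ - s) / p with hd
  have hdp : p * d = p * κ - s := by rw [hd]; field_simp
  have hhc : Continuous h := continuous_iff_continuousAt.2 fun t => (hh t).continuousAt
  rw [← integral_const_mul]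
  refine hardy_core hr (Φ := fun t => |d| ^ (p - 2) * d * (|h t| ^ p * t ^ s))
    (Φ' := fun t => |d| ^ (p - 2) * d * (p * |h t| ^ (p - 2) * h t * h' t * t ^ s +
      |h t| ^ p * (s * t ^ (s - 1))))
    (integrableOn_weight hr (by linarith) (by linarith) hL) ?_ ?_ ?_ ?_ ?_
  · intro t ht
    have := ht.1
    positivity
  · intro t ht
    exact (((hasDerivAt_abs_rpow (h t) hp).comp t (hh t)).mul
      (Real.hasDerivAt_rpow_const (Or.inl ht.1.ne'))).const_mul _
  · intro t ht
    have ht0 := ht.1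
    have hy := young_tangent hp (t * L t) (d * h t)
    rw [hLe t ht0] at hy ⊢
    -- `Y = d h` is the case of equality, attained along `L = d h / t`
    have e1 : t * (h' t + κ / t * h t) = t * h' t + κ * h t := by field_simp
    have e2 : |h' t + κ / t * h t| ^ p * t ^ (s - 1 + p) =
        |t * h' t + κ * h t| ^ p * t ^ (s - 1) := by
      rw [← e1, abs_mul, abs_of_pos ht0, Real.mul_rpow ht0.le (abs_nonneg _),
        Real.rpow_add ht0]
      ring
    have e3 : t ^ s = t ^ (s - 1) * t := by
      rw [← Real.rpow_add_one ht0.ne']; congr 1; ring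
    have e4 : ∀ x : ℝ, |x| ^ p = |x| ^ (p - 2) * (x * x) := by
      intro x
      by_cases hx : x = 0
      · simp [hx, Real.zero_rpow hp0]
      · rw [← abs_mul_abs_self x, ← mul_assoc, ← Real.rpow_add_one (abs_ne_zero.2 hx),
          ← Real.rpow_add_one (abs_ne_zero.2 hx)]
        congr 1; ring
    rw [e1, abs_mul, Real.mul_rpow (abs_nonneg _) (abs_nonneg _),
      Real.mul_rpow (abs_nonneg _) (abs_nonneg _)] at hy
    rw [e2, e3]
    have h3 := mul_le_mul_of_nonneg_right hy (Real.rpow_nonneg ht0.le (s - 1))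
    rw [e4 d, e4 (h t)] at h3 ⊢
    have hs' : s = p * κ - p * d := by linarith
    set T := t ^ (s - 1)
    clear_value T
    set D := |d| ^ (p - 2)
    clear_value D
    set H := |h t| ^ (p - 2)
    clear_value H
    rw [hs']
    refine le_trans (le_of_eq ?_) (sub_le_sub_right h3 _)
    ring
  · simp [h0, Real.zero_rpow hp0]
  · have hc : Continuous fun t => |d| ^ (p - 2) * d * (|h t| ^ p * t ^ s) :=
      continuous_const.mul ((hhc.abs.rpow_const fun _ => Or.inr (by linarith)).mul
        (continuous_id.rpow_const fun _ => Or.inr hs.le))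
    have := hc.tendsto 0
    simp only [Real.zero_rpow hs.ne', mul_zero] at this
    exact this.mono_left nhdsWithin_le_nhds

/-- One-dimensional critical Hardy inequality: at the exponent where the power weight
degenerates to `1 / t`, the logarithmic factor `E1` restores the inequality. -/
lemma hardy_critical {r R p : ℝ} (hr : 0 < r) (hR : r ≤ R) (hp : 1 < p) {h h' : ℝ → ℝ}
    (hh : ∀ t, HasDerivAt h (h' t) t) (hc' : Continuous h') (h0 : h r = 0) :
    ((p - 1) / p) ^ p * ∫ t in Set.Ioc 0 r, |h t| ^ p / (t * E1 (t / R) ^ p) ≤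
      ∫ t in Set.Ioc 0 r, |h' t| ^ p * t ^ (p - 1) := by
  have hp0 : p ≠ 0 := by positivity
  have hR0 : 0 < R := hr.trans_le hR
  set c := (p - 1) / p with hc
  have hcp : p * c = p - 1 := by rw [hc]; field_simp
  have hc0 : 0 < c := div_pos (by linarith) (by linarith)
  have hhc : Continuous h := continuous_iff_continuousAt.2 fun t => (hh t).continuousAt
  have hE : ∀ t ∈ Set.Ioc 0 r, 0 < E1 (t / R) := by
    intro t ht
    have : Real.log (t / R) ≤ 0 :=
      Real.log_nonpos (div_pos ht.1 hR0).le ((div_le_one hR0).2 (ht.2.trans hR))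
    unfold E1; linarith
  have hEd : ∀ t, 0 < t → HasDerivAt (fun t => E1 (t / R)) (-(1 / t)) t := by
    intro t ht
    have h1 : HasDerivAt (fun t => t / R) (1 / R) t := (hasDerivAt_id t).div_const R
    have h2 := (h1.log (div_pos ht hR0).ne').const_sub 1
    refine h2.congr_deriv ?_
    field_simp
  rw [← integral_const_mul]
  refine hardy_core hr (Φ := fun t => -c ^ (p - 1) * (|h t| ^ p * E1 (t / R) ^ (1 - p)))
    (Φ' := fun t => -c ^ (p - 1) * (p * |h t| ^ (p - 2) * h t * h' t * E1 (t / R) ^ (1 - p) +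
      |h t| ^ p * (-(1 / t) * (1 - p) * E1 (t / R) ^ (1 - p - 1))))
    (integrableOn_weight hr (by linarith) (by linarith) hc') ?_ ?_ ?_ ?_ ?_
  · intro t ht
    have := ht.1
    positivity
  · intro t ht
    exact (((hasDerivAt_abs_rpow (h t) hp).comp t (hh t)).mul
      ((hEd t ht.1).rpow_const (Or.inl (hE t ht).ne'))).const_mul _
  · intro t ht
    have ht0 := ht.1
    have hEt := hE t ht
    set E := E1 (t / R)
    clear_value E
    have hy := young_tangent hp (t * h' t) (-(c / E) * h t)
    have e4 : |h t| ^ p = |h t| ^ (p - 2) * (h t * h t) := by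
      by_cases hx : h t = 0
      · simp [hx, Real.zero_rpow hp0]
      · rw [← abs_mul_abs_self (h t), ← mul_assoc, ← Real.rpow_add_one (abs_ne_zero.2 hx),
          ← Real.rpow_add_one (abs_ne_zero.2 hx)]
        congr 1; ring
    -- the sign of `Y = -(c / E) h` is that of `t h'` when `h` is a positive power
    -- of `E`, since `E` has derivative `-1 / t`
    have hcE : 0 < c / E := div_pos hc0 hEt
    rw [abs_mul, abs_mul, abs_neg, abs_of_pos hcE, abs_of_pos ht0,
      Real.mul_rpow hcE.le (abs_nonneg _), Real.mul_rpow hcE.le (abs_nonneg _),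
      Real.mul_rpow ht0.le (abs_nonneg _), Real.div_rpow hc0.le hEt.le,
      Real.div_rpow hc0.le hEt.le] at hy
    have t1 : t ^ p = t ^ (p - 1) * t := by
      rw [← Real.rpow_add_one ht0.ne']; congr 1; ring
    have c1 : c ^ (p - 2) = c ^ (p - 1) / c := by
      rw [← Real.rpow_sub_one hc0.ne']; congr 1; ring
    have c2 : c ^ p = c ^ (p - 1) * c := by
      rw [← Real.rpow_add_one hc0.ne']; congr 1; ring
    have E1' : E ^ (p - 2) = E ^ p / (E * E) := by
      rw [← div_div, ← Real.rpow_sub_one hEt.ne', ← Real.rpow_sub_one hEt.ne']; congr 1; ring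
    have E2' : E ^ (1 - p) = E / E ^ p := by
      rw [Real.rpow_sub hEt, Real.rpow_one]
    have E3' : E ^ (1 - p - 1) = (E ^ p)⁻¹ := by
      rw [← Real.rpow_neg hEt.le]; congr 1; ring
    have hEp : 0 < E ^ p := Real.rpow_pos_of_pos hEt p
    rw [t1, c1, c2, E1', e4] at hy
    rw [c2, e4, E2', E3']
    have h3 := mul_le_mul_of_nonneg_right hy (inv_pos.2 ht0).le
    set T := t ^ (p - 1)
    clear_value T
    set C := c ^ (p - 1)
    clear_value C
    set H := |h t| ^ (p - 2)
    clear_value H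
    set Q := E ^ p
    clear_value Q
    have e5 : T * t * |h' t| ^ p * t⁻¹ = |h' t| ^ p * T := by field_simp
    rw [e5] at h3
    refine le_trans (le_of_eq ?_) (sub_le_sub_right h3 _)
    have : p = 1 + p * c := by linarith
    have hp1 : 1 - p = -(p * c) := by linarith
    have hp2 : p - 1 = p * c := by linarith
    rw [hp1, hp2]
    field_simp
    linear_combination (-(C * H * (h t)^2 * c)) * this
  · simp [h0, Real.zero_rpow hp0]
  · have h1 : Filter.Tendsto (fun t => E1 (t / R)) (nhdsWithin 0 (Set.Ioi 0)) Filter.atTop := by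
      have h2 : Filter.Tendsto (fun t : ℝ => t / R) (nhdsWithin 0 (Set.Ioi 0))
          (nhdsWithin 0 (Set.Ioi 0)) := by
        refine tendsto_nhdsWithin_iff.2 ⟨?_, ?_⟩
        · have : Filter.Tendsto (fun t : ℝ => t / R) (nhds 0) (nhds (0 / R)) :=
            (continuous_id.div_const R).tendsto 0
          rw [zero_div] at this
          exact this.mono_left nhdsWithin_le_nhds
        · filter_upwards [self_mem_nhdsWithin] with t ht using div_pos ht hR0
      have h3 := Real.tendsto_log_nhdsGT_zero.comp h2
      have h4 := Filter.tendsto_atTop_add_const_left _ (1:ℝ) (Filter.tendsto_neg_atBot_atTop.comp h3)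
      exact h4.congr fun t => by simp [E1, sub_eq_add_neg]
    have h5 : Filter.Tendsto (fun t => E1 (t / R) ^ (1 - p)) (nhdsWithin 0 (Set.Ioi 0)) (nhds 0) := by
      have := (tendsto_rpow_neg_atTop (show 0 < p - 1 by linarith)).comp h1
      rw [neg_sub] at this
      exact this
    have h6 : Filter.Tendsto (fun t => |h t| ^ p) (nhdsWithin 0 (Set.Ioi 0)) (nhds (|h 0| ^ p)) :=
      ((hhc.abs.rpow_const fun _ => Or.inr (by linarith)).tendsto 0).mono_left nhdsWithin_le_nhds
    simpa using (h6.mul h5).const_mul (-c ^ (p - 1))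

/-! ### Radial functions and their profiles -/

/-- Smooth radial functions on `ℝⁿ` supported in the open ball of radius `r`. -/
structure IsRad {n : ℕ} (r : ℝ) (f : EuclideanSpace ℝ (Fin n) → ℝ) : Prop where
  smooth : ContDiff ℝ (⊤ : ℕ∞) f
  radial : ∀ x y, ‖x‖ = ‖y‖ → f x = f y
  supp : tsupport f ⊆ Metric.ball 0 r

/-- The restriction of `f` to the line spanned by `e`. For a unit vector `e` and a radial `f`
this is the radial profile of `f`, extended evenly to `ℝ` and hence smooth at the origin. -/
def prof {n : ℕ} (e : EuclideanSpace ℝ (Fin n)) (f : EuclideanSpace ℝ (Fin n) → ℝ) (t : ℝ) : ℝ :=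
  f (t • e)

section Radial

variable {n : ℕ} {r : ℝ} {e : EuclideanSpace ℝ (Fin n)} {f : EuclideanSpace ℝ (Fin n) → ℝ}

lemma IsRad.eq_prof (hf : IsRad r f) (he : ‖e‖ = 1) (x : EuclideanSpace ℝ (Fin n)) :
    f x = prof e f ‖x‖ :=
  hf.radial _ _ (by simp [norm_smul, he])

lemma IsRad.prof_smooth (hf : IsRad r f) : ContDiff ℝ (⊤ : ℕ∞) (prof e f) :=
  hf.smooth.comp (contDiff_id.smul contDiff_const)

lemma IsRad.hasDerivAt_prof (hf : IsRad r f) (t : ℝ) :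
    HasDerivAt (prof e f) (deriv (prof e f) t) t :=
  (hf.prof_smooth.differentiable (by simp) t).hasDerivAt

lemma IsRad.deriv_prof_smooth (hf : IsRad r f) : ContDiff ℝ (⊤ : ℕ∞) (deriv (prof e f)) :=
  ((contDiff_infty_iff_deriv (f := prof e f)).1 hf.prof_smooth).2

lemma IsRad.hasDerivAt_deriv_prof (hf : IsRad r f) (t : ℝ) :
    HasDerivAt (deriv (prof e f)) (deriv (deriv (prof e f)) t) t :=
  (hf.deriv_prof_smooth.differentiable (by simp) t).hasDerivAt

lemma IsRad.prof_eventually_zero (hf : IsRad r f) (he : ‖e‖ = 1) (hr : 0 < r) :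
    prof e f =ᶠ[nhds r] fun _ => 0 := by
  have h1 : r • e ∉ tsupport f := by
    intro h
    have := hf.supp h
    simp [norm_smul, he, abs_of_pos hr] at this
  have h2 := notMem_tsupport_iff_eventuallyEq.1 h1
  have h3 : Filter.Tendsto (fun t : ℝ => t • e) (nhds r) (nhds (r • e)) :=
    (continuous_id.smul continuous_const).tendsto r
  exact h3.eventually h2

lemma IsRad.prof_zero (hf : IsRad r f) (he : ‖e‖ = 1) (hr : 0 < r) : prof e f r = 0 :=
  (hf.prof_eventually_zero he hr).eq_of_nhds

lemma IsRad.deriv_prof_zero (hf : IsRad r f) (he : ‖e‖ = 1) (hr : 0 < r) :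
    deriv (prof e f) r = 0 := by
  rw [(hf.prof_eventually_zero he hr).deriv_eq]; simp

lemma hasFDerivAt_norm_of_ne {x : EuclideanSpace ℝ (Fin n)} (hx : x ≠ 0) :
    HasFDerivAt (fun y : EuclideanSpace ℝ (Fin n) => ‖y‖) (‖x‖⁻¹ • innerSL ℝ x) x := by
  have h := ((hasStrictFDerivAt_norm_sq x).hasFDerivAt).sqrt
    (by simpa using hx)
  simp only [Real.sqrt_sq (norm_nonneg _)] at h
  refine h.congr_fderiv ?_
  ext y
  have : ‖x‖ ≠ 0 := norm_ne_zero_iff.2 hx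
  simp
  field_simp

lemma IsRad.hasFDerivAt (hf : IsRad r f) (he : ‖e‖ = 1) {x : EuclideanSpace ℝ (Fin n)}
    (hx : x ≠ 0) : HasFDerivAt f ((deriv (prof e f) ‖x‖ / ‖x‖) • innerSL ℝ x) x := by
  have h := (hf.hasDerivAt_prof (e := e) ‖x‖).comp_hasFDerivAt x (hasFDerivAt_norm_of_ne hx)
  have e1 : f = prof e f ∘ fun y => ‖y‖ := funext fun x => hf.eq_prof he x
  rw [← e1, smul_smul, ← div_eq_mul_inv] at h
  exact h

/-- Away from the origin the gradient of a radial function has norm `|g' ‖x‖|`, where `g` is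
the profile. -/
lemma IsRad.norm_gradient (hf : IsRad r f) (he : ‖e‖ = 1) {x : EuclideanSpace ℝ (Fin n)}
    (hx : x ≠ 0) : ‖gradient f x‖ = |deriv (prof e f) ‖x‖| := by
  rw [gradient, LinearIsometryEquiv.norm_map, (hf.hasFDerivAt he hx).fderiv, norm_smul,
    innerSL_apply_norm, norm_div, norm_norm, div_mul_cancel₀ _ (norm_ne_zero_iff.2 hx),
    Real.norm_eq_abs]

/-- The Laplacian in polar coordinates: `Δ f = g'' + (n - 1) g' / ‖x‖` for the profile `g`. -/
lemma IsRad.lap_eq (hf : IsRad r f) (he : ‖e‖ = 1) {x : EuclideanSpace ℝ (Fin n)} (hx : x ≠ 0) :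
    lap f x = deriv (deriv (prof e f)) ‖x‖ + ((n : ℝ) - 1) / ‖x‖ * deriv (prof e f) ‖x‖ := by
  have hx0 : ‖x‖ ≠ 0 := norm_ne_zero_iff.2 hx
  set g' := deriv (prof e f) with hg'
  have hq : HasDerivAt (fun t => g' t / t) ((deriv g' ‖x‖ * ‖x‖ - g' ‖x‖ * 1) / ‖x‖ ^ 2) ‖x‖ :=
    (hf.hasDerivAt_deriv_prof ‖x‖).div (hasDerivAt_id _) hx0
  have hq' := hq.comp_hasFDerivAt x (hasFDerivAt_norm_of_ne hx)
  have hterm : ∀ i : Fin n, fderiv ℝ (fun y => fderiv ℝ f y (EuclideanSpace.single i 1)) x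
      (EuclideanSpace.single i 1) =
      g' ‖x‖ / ‖x‖ + (deriv g' ‖x‖ * ‖x‖ - g' ‖x‖) / ‖x‖ ^ 3 * x i ^ 2 := by
    intro i
    have hev : (fun y => fderiv ℝ f y (EuclideanSpace.single i 1)) =ᶠ[nhds x]
        fun y => ((fun t => g' t / t) ∘ fun y : EuclideanSpace ℝ (Fin n) => ‖y‖) y *
          EuclideanSpace.proj (𝕜 := ℝ) i y := by
      filter_upwards [isOpen_ne.mem_nhds hx] with y hy
      rw [(hf.hasFDerivAt he hy).fderiv]
      simp [EuclideanSpace.inner_single_right, hg']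
    have hprod := hq'.mul (EuclideanSpace.proj (𝕜 := ℝ) i).hasFDerivAt
    rw [(hprod.congr_of_eventuallyEq hev).fderiv]
    simp [EuclideanSpace.inner_single_right]
    field_simp
  unfold lap
  simp only [hterm]
  rw [Finset.sum_add_distrib, ← Finset.mul_sum, ← EuclideanSpace.real_norm_sq_eq]
  simp
  field_simp
  ring

/-- The Laplacian preserves the class; radiality at the origin is vacuous, since `0` is the only
point of norm `0`. -/
lemma IsRad.lap (hf : IsRad r f) (he : ‖e‖ = 1) : IsRad r (lap f) where
  smooth := by
    unfold _root_.lap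
    refine ContDiff.sum fun i _ => ?_
    have h1 : ContDiff ℝ (⊤ : ℕ∞) fun y => fderiv ℝ f y (EuclideanSpace.single i 1) :=
      (hf.smooth.fderiv_right (by simp)).clm_apply contDiff_const
    exact (h1.fderiv_right (by simp)).clm_apply contDiff_const
  radial := by
    intro x y hxy
    by_cases hx : x = 0
    · subst hx
      rw [norm_zero, eq_comm, norm_eq_zero] at hxy
      rw [hxy]
    · have hy : y ≠ 0 := by rw [← norm_ne_zero_iff, ← hxy]; exact norm_ne_zero_iff.2 hx
      rw [hf.lap_eq he hx, hf.lap_eq he hy, hxy]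
  supp := by
    refine (closure_minimal ?_ (isClosed_tsupport f)).trans hf.supp
    intro x hx
    by_contra h
    have h1 := notMem_tsupport_iff_eventuallyEq.1 h
    apply hx
    unfold _root_.lap
    refine Finset.sum_eq_zero fun i _ => ?_
    have h2 : (fun y => fderiv ℝ f y (EuclideanSpace.single i 1)) =ᶠ[nhds x] fun _ => 0 := by
      filter_upwards [h1.fderiv (𝕜 := ℝ)] with y hy
      rw [hy]; simp
    rw [h2.fderiv_eq]; simp

lemma IsRad.prof_lap (hf : IsRad r f) (he : ‖e‖ = 1) {t : ℝ} (ht : 0 < t) :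
    prof e (_root_.lap f) t =
      deriv (deriv (prof e f)) t + ((n : ℝ) - 1) / t * deriv (prof e f) t := by
  have h0 : t • e ≠ 0 := by
    rw [← norm_ne_zero_iff, norm_smul, he]; simpa using ht.ne'
  have h := hf.lap_eq he h0
  rwa [norm_smul, he, mul_one, Real.norm_eq_abs, abs_of_pos ht] at h

lemma IsRad.lap_iterate (hf : IsRad r f) (he : ‖e‖ = 1) (k : ℕ) : IsRad r (_root_.lap^[k] f) := by
  induction k with
  | zero => exact hf
  | succ k ih => rw [Function.iterate_succ_apply']; exact ih.lap he

/-! ### Hardy and Rellich inequalities for radial functions -/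

/-- Hardy inequality bounding a radial function by its gradient. -/
lemma IsRad.hardy_grad (hf : IsRad r f) (he : ‖e‖ = 1) (hr : 0 < r) {p s : ℝ} (hp : 1 < p)
    (hs : 0 < s) :
    (s / p) ^ p * ∫ t in Set.Ioc 0 r, |prof e f t| ^ p * t ^ (s - 1) ≤
      ∫ t in Set.Ioc 0 r, |deriv (prof e f) t| ^ p * t ^ (s - 1 + p) := by
  have h := hardy_weight hr hp hs (κ := 0) (fun t => hf.hasDerivAt_prof (e := e) t)
    (hf.deriv_prof_smooth (e := e)).continuous (fun t _ => by simp) (hf.prof_zero he hr)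
  rwa [mul_zero, zero_sub, neg_div, abs_neg, abs_of_pos (by positivity)] at h

/-- Hardy inequality bounding the radial derivative by the Laplacian. -/
lemma IsRad.hardy_lap (hf : IsRad r f) (he : ‖e‖ = 1) (hr : 0 < r) {p s : ℝ} (hp : 1 < p)
    (hs : 0 < s) (hc : 0 ≤ p * ((n : ℝ) - 1) - s) :
    ((p * ((n : ℝ) - 1) - s) / p) ^ p *
        ∫ t in Set.Ioc 0 r, |deriv (prof e f) t| ^ p * t ^ (s - 1) ≤
      ∫ t in Set.Ioc 0 r, |prof e (_root_.lap f) t| ^ p * t ^ (s - 1 + p) := by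
  have h := hardy_weight hr hp hs (κ := (n : ℝ) - 1)
    (fun t => hf.hasDerivAt_deriv_prof (e := e) t)
    (hf.lap he).prof_smooth.continuous (fun t ht => hf.prof_lap he ht) (hf.deriv_prof_zero he hr)
  rwa [abs_of_nonneg (by positivity)] at h

/-- Radial Rellich inequality for `Δ ^ j` with the weight `|x| ^ (-i p)`: each Laplacian costs one
Hardy inequality from `Δ f` to the radial derivative and one from there to `f`. -/
lemma IsRad.rellich (he : ‖e‖ = 1) (hr : 0 < r) {p : ℝ} (hp : 1 < p) (i : ℝ) (hi : 0 ≤ i) (j : ℕ) :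
    ∀ f, IsRad r f → (i + 2 * j) * p < n →
      (∏ l ∈ Finset.range j, (((n : ℝ) * (p - 1) + i * p + 2 * l * p) / p *
          (((n : ℝ) - i * p - 2 * (l + 1) * p) / p)) ^ p) *
        ∫ t in Set.Ioc 0 r, |prof e f t| ^ p * t ^ ((n : ℝ) - 1 - (i + 2 * j) * p) ≤
      ∫ t in Set.Ioc 0 r, |prof e (_root_.lap^[j] f) t| ^ p * t ^ ((n : ℝ) - 1 - i * p) := by
  induction j with
  | zero => intro f hf _; simp
  | succ j ih =>
    intro f hf hlt
    push_cast at hlt ⊢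
    have hp0 : 0 < p := by linarith
    have hn : (0:ℝ) ≤ n := Nat.cast_nonneg n
    have h1 := ih (_root_.lap f) (hf.lap he) (by nlinarith)
    rw [← Function.iterate_succ_apply] at h1
    refine le_trans ?_ h1
    have hA : (0:ℝ) ≤ (n : ℝ) * (p - 1) + i * p + 2 * j * p := by
      have : 0 ≤ (n : ℝ) * (p - 1) := mul_nonneg hn (by linarith)
      positivity
    have hB : (0:ℝ) < (n : ℝ) - i * p - 2 * (j + 1) * p := by linarith
    have hs : (0:ℝ) < (n : ℝ) - (i + 2 * j + 1) * p := by linarith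
    have e1 : p * ((n : ℝ) - 1) - (n - (i + 2 * j + 1) * p) =
        (n : ℝ) * (p - 1) + i * p + 2 * j * p := by ring
    have h2 := hf.hardy_lap he hr hp hs (by rw [e1]; exact hA)
    have h3 := hf.hardy_grad he hr hp hB
    rw [e1, show (n : ℝ) - (i + 2 * j + 1) * p - 1 + p = n - 1 - (i + 2 * j) * p by ring] at h2
    rw [show (n : ℝ) - i * p - 2 * (j + 1) * p - 1 + p = n - (i + 2 * j + 1) * p - 1 by ring,
      show (n : ℝ) - i * p - 2 * (j + 1) * p - 1 = n - 1 - (i + 2 * (j + 1)) * p by ring] at h3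
    rw [Finset.prod_range_succ, mul_assoc]
    refine mul_le_mul_of_nonneg_left ?_ ?_
    · rw [Real.mul_rpow (by positivity) (by positivity), mul_assoc]
      exact (mul_le_mul_of_nonneg_left h3 (by positivity)).trans h2
    · refine Finset.prod_nonneg fun l hl => Real.rpow_nonneg (mul_nonneg ?_ ?_) _
      · have : 0 ≤ (n : ℝ) * (p - 1) := mul_nonneg hn (by linarith)
        positivity
      · have : (l : ℝ) + 1 ≤ j := by exact_mod_cast Finset.mem_range.1 hl
        refine div_nonneg ?_ hp0.le
        nlinarith

/-- Critical step, from the logarithmic weight on `f` to a power weight on `Δ f`. When `n = m p`,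
`t ^ (2 * p - 1)` is the weight `|x| ^ (-(m-2) p)` in polar coordinates. -/
lemma IsRad.critical (hf : IsRad r f) (he : ‖e‖ = 1) (hr : 0 < r) {R p : ℝ} (hR : r ≤ R)
    (hp : 1 < p) (hn : 2 ≤ (n : ℝ)) :
    (((n : ℝ) - 2) * ((p - 1) / p)) ^ p *
        ∫ t in Set.Ioc 0 r, |prof e f t| ^ p / (t * E1 (t / R) ^ p) ≤
      ∫ t in Set.Ioc 0 r, |prof e (_root_.lap f) t| ^ p * t ^ (2 * p - 1) := by
  have hp0 : 0 < p := by linarith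
  have h1 := hardy_critical hr hR hp (fun t => hf.hasDerivAt_prof (e := e) t)
    hf.deriv_prof_smooth.continuous (hf.prof_zero he hr)
  have h2 := hf.hardy_lap he hr hp hp0 (by nlinarith)
  rw [show (p * ((n : ℝ) - 1) - p) / p = n - 2 by field_simp; ring,
    show p - 1 + p = 2 * p - 1 by ring] at h2
  have hn2 : (0:ℝ) ≤ (n : ℝ) - 2 := by linarith
  have hpp : 0 ≤ (p - 1) / p := div_nonneg (by linarith) hp0.le
  rw [Real.mul_rpow hn2 hpp, mul_assoc]
  exact (mul_le_mul_of_nonneg_left h1 (Real.rpow_nonneg hn2 p)).trans h2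

end Radial

/-! ### The critical inequality -/

/-- Polar coordinates for radial functions on a ball. -/
lemma setIntegral_ball_radial {n : ℕ} [NeZero n] {r : ℝ} (F : ℝ → ℝ) :
    ∫ x in Metric.ball (0 : EuclideanSpace ℝ (Fin n)) r, F ‖x‖ =
      n * volume.real (Metric.ball (0 : EuclideanSpace ℝ (Fin n)) 1) *
        ∫ t in Set.Ioc 0 r, t ^ (n - 1) * F t := by
  have e1 : ∀ x : EuclideanSpace ℝ (Fin n), (Metric.ball (0 : EuclideanSpace ℝ (Fin n)) r).indicator
      (fun x => F ‖x‖) x = (Set.Iio r).indicator F ‖x‖ := by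
    intro x
    by_cases h : ‖x‖ < r
    · rw [Set.indicator_of_mem (mem_ball_zero_iff.2 h), Set.indicator_of_mem (Set.mem_Iio.2 h)]
    · rw [Set.indicator_of_notMem (fun h' => h (mem_ball_zero_iff.1 h')),
        Set.indicator_of_notMem (fun h' => h (Set.mem_Iio.1 h'))]
  rw [← integral_indicator measurableSet_ball]
  simp only [e1]
  rw [integral_fun_norm_addHaar]
  simp only [finrank_euclideanSpace, Fintype.card_fin, nsmul_eq_mul, smul_eq_mul]
  rw [mul_assoc]
  congr 2
  have e2 : ∀ t : ℝ, t ^ (n - 1) * (Set.Iio r).indicator F t =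
      (Set.Iio r).indicator (fun t => t ^ (n - 1) * F t) t := by
    intro t; by_cases h : t ∈ Set.Iio r <;> simp [h]
  simp only [e2]
  rw [setIntegral_indicator measurableSet_Iio, Set.Ioi_inter_Iio, integral_Ioc_eq_integral_Ioo]

/-- Critical Hardy–Rellich inequality for radial functions. -/
theorem stmt5 (n m : ℕ) (hm : 2 ≤ m) (hmn : 2 * m ≤ n) (r R : ℝ) (hr : 0 < r) (hR : r ≤ R)
    (u : EuclideanSpace ℝ (Fin n) → ℝ)
    (hsmooth : ContDiff ℝ (⊤ : ℕ∞) u) (hcpt : HasCompactSupport u)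
    (hsupp : tsupport u ⊆ Metric.ball 0 r) (hrad : ∃ g : ℝ → ℝ, ∀ x, u x = g ‖x‖) :
    0 ≤ Inm n m (Metric.ball 0 r) R u := by
  obtain ⟨g, hg⟩ := hrad
  have hu : IsRad r u := ⟨hsmooth, fun x y h => by rw [hg, hg, h], hsupp⟩
  have : NeZero n := ⟨by omega⟩
  set e : EuclideanSpace ℝ (Fin n) := EuclideanSpace.single 0 1
  have he : ‖e‖ = 1 := by simp [e]
  have hm0 : (0:ℝ) < m := by exact_mod_cast (by omega : 0 < m)
  have hm2 : (2:ℝ) ≤ m := by exact_mod_cast hm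
  have hmn' : 2 * (m:ℝ) ≤ n := by exact_mod_cast hmn
  have hn2 : (2:ℝ) ≤ n := by linarith
  set p : ℝ := (n : ℝ) / m with hpdef
  have hpm : p * m = n := div_mul_cancel₀ _ hm0.ne'
  have hp2 : 2 ≤ p := (le_div_iff₀ hm0).2 hmn'
  have hp : 1 < p := by linarith
  have hp0 : 0 < p := by linarith
  obtain ⟨k, hk⟩ : ∃ k, m / 2 = k + 1 := ⟨m / 2 - 1, by omega⟩
  have hk2 : (m - 2) / 2 = k := by omega
  have hcrit := hu.critical he hr hR hp hn2
  have hcc : ((n : ℝ) - 2) * ((n : ℝ) - m) / n = ((n : ℝ) - 2) * ((p - 1) / p) := by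
    rw [hpdef]; field_simp
  have hwt : ∀ (a : ℝ) (t : ℝ), 0 < t → t ^ (n - 1) * a = a * t ^ ((n:ℝ) - 1) := by
    intro a t ht
    rw [mul_comm, ← Real.rpow_natCast, Nat.cast_sub (by omega), Nat.cast_one]
  -- the logarithmic integral in polar coordinates
  have hright : ∫ x in Metric.ball (0 : EuclideanSpace ℝ (Fin n)) r,
      |u x| ^ p / (‖x‖ ^ n * (E1 (‖x‖ / R)) ^ p) =
      n * volume.real (Metric.ball (0 : EuclideanSpace ℝ (Fin n)) 1) *
        ∫ t in Set.Ioc 0 r, |prof e u t| ^ p / (t * E1 (t / R) ^ p) := by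
    simp only [hu.eq_prof he]
    rw [setIntegral_ball_radial (fun t => |prof e u t| ^ p / (t ^ n * (E1 (t / R)) ^ p))]
    congr 1
    refine setIntegral_congr_fun measurableSet_Ioc fun t ht => ?_
    have ht0 := ht.1.ne'
    have : t ^ n = t ^ (n - 1) * t := by rw [← pow_succ]; congr 1; omega
    simp only [this]
    rw [mul_assoc, mul_div_assoc', mul_div_mul_left _ _ (pow_ne_zero _ ht0)]
  -- the subcritical chain, from `∇ ^ m u = ∇ ^ (m - 2) (Δ u)` down to `Δ u`
  have hJ : Rconst n (m - 2) p * ∫ t in Set.Ioc 0 r, |prof e (lap u) t| ^ p * t ^ (2 * p - 1) ≤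
      ∫ t in Set.Ioc 0 r, (if Even m then |prof e (lap^[m / 2] u) t| ^ p * t ^ ((n:ℝ) - 1)
        else |deriv (prof e (lap^[m / 2] u)) t| ^ p * t ^ ((n:ℝ) - 1)) := by
    unfold Rconst
    rw [hk2, hk, Function.iterate_succ_apply]
    by_cases hev : Even m
    · have hev2 : Even (m - 2) := (Nat.even_sub hm).2 (by simp [hev])
      have hmk : (m : ℝ) = 2 * k + 2 := by
        have : m = 2 * k + 2 := by have := Nat.even_iff.1 hev; omega
        exact_mod_cast this
      have h := IsRad.rellich he hr hp 0 le_rfl k (lap u) (hu.lap he)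
        (by rw [← hpm, hmk]; linarith)
      simp only [zero_mul, add_zero, sub_zero, zero_add] at h
      rw [show (n : ℝ) - 1 - 2 * k * p = 2 * p - 1 by rw [← hpm, hmk]; ring] at h
      simp only [hev, hev2, if_true]
      exact h
    · have hev2 : ¬ Even (m - 2) := fun h => hev (((Nat.even_sub hm).1 h).2 (by simp))
      have hmk : (m : ℝ) = 2 * k + 3 := by
        have : m = 2 * k + 3 := by have := Nat.odd_iff.1 (Nat.not_even_iff_odd.1 hev); omega
        exact_mod_cast this
      have hk0 : (0:ℝ) ≤ k := Nat.cast_nonneg k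
      have hkp : 0 ≤ k * p := by positivity
      have h := IsRad.rellich he hr hp 1 zero_le_one k (lap u) (hu.lap he)
        (by rw [← hpm, hmk]; linarith)
      have hnp : 0 < (n:ℝ) - p := by rw [← hpm, hmk]; linarith
      have h' := ((hu.lap he).lap_iterate he k).hardy_grad he hr hp hnp
      simp only [one_mul] at h
      rw [show (n : ℝ) - 1 - (1 + 2 * k) * p = 2 * p - 1 by rw [← hpm, hmk]; ring] at h
      rw [show (n : ℝ) - p - 1 + p = n - 1 by ring,
        show (n : ℝ) - p - 1 = n - 1 - p by ring] at h'
      simp only [hev, hev2, if_false]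
      rw [mul_assoc]
      exact (mul_le_mul_of_nonneg_left h (by positivity)).trans h'
  have hleft : ∫ x in Metric.ball (0 : EuclideanSpace ℝ (Fin n)) r, nablaPowNorm m u x ^ p =
      n * volume.real (Metric.ball (0 : EuclideanSpace ℝ (Fin n)) 1) *
      ∫ t in Set.Ioc 0 r, (if Even m then |prof e (lap^[m / 2] u) t| ^ p * t ^ ((n:ℝ) - 1)
        else |deriv (prof e (lap^[m / 2] u)) t| ^ p * t ^ ((n:ℝ) - 1)) := by
    have hL := hu.lap_iterate he (m / 2)
    by_cases hev : Even m
    · simp only [nablaPowNorm, hev, if_true, hL.eq_prof he]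
      rw [setIntegral_ball_radial (fun t => |prof e (lap^[m / 2] u) t| ^ p)]
      congr 1
      exact setIntegral_congr_fun measurableSet_Ioc fun t ht => hwt _ t ht.1
    · simp only [nablaPowNorm, hev, if_false]
      -- the profile formula for the gradient is only available off the origin
      have hae : ∀ᵐ x ∂(volume.restrict (Metric.ball (0 : EuclideanSpace ℝ (Fin n)) r)),
          ‖gradient (lap^[m / 2] u) x‖ ^ p = |deriv (prof e (lap^[m / 2] u)) ‖x‖| ^ p := by
        refine ae_restrict_of_ae ?_
        filter_upwards [Measure.ae_ne volume (0 : EuclideanSpace ℝ (Fin n))] with x hx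
        rw [hL.norm_gradient he hx]
      rw [integral_congr_ae hae,
        setIntegral_ball_radial (fun t => |deriv (prof e (lap^[m / 2] u)) t| ^ p)]
      congr 1
      exact setIntegral_congr_fun measurableSet_Ioc fun t ht => hwt _ t ht.1
  have hRc : 0 ≤ Rconst n (m - 2) p := by
    have hn0 : 0 ≤ (n : ℝ) * (p - 1) := mul_nonneg (by linarith) (by linarith)
    have hlk : ∀ l ∈ Finset.range k, ((l:ℝ) + 1) ≤ k := fun l hl => by
      exact_mod_cast Finset.mem_range.1 hl
    have hkm : 2 * (k:ℝ) + 2 ≤ m := by exact_mod_cast (by omega : 2 * k + 2 ≤ m)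
    unfold Rconst
    rw [hk2]
    split_ifs with h
    · refine Finset.prod_nonneg fun l hl => Real.rpow_nonneg (mul_nonneg (by positivity)
        (div_nonneg ?_ hp0.le)) _
      have := hlk l hl
      rw [← hpm]; nlinarith
    · refine mul_nonneg (Real.rpow_nonneg (div_nonneg (by rw [← hpm]; nlinarith) hp0.le) _)
        (Finset.prod_nonneg fun l hl => Real.rpow_nonneg (mul_nonneg (by positivity)
        (div_nonneg ?_ hp0.le)) _)
      have := hlk l hl
      rw [← hpm]; nlinarith
  unfold Inm Rnm
  rw [← hpdef, hleft, hright, hcc, sub_nonneg]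
  have hfin := (mul_le_mul_of_nonneg_left hcrit hRc).trans hJ
  have hfin2 := mul_le_mul_of_nonneg_left hfin
    (show 0 ≤ (n:ℝ) * volume.real (Metric.ball (0 : EuclideanSpace ℝ (Fin n)) 1) by positivity)
  refine le_trans (le_of_eq ?_) hfin2
  ring
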